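/- Let γ be a Frenet curve in M³(C) with frame (T,N,B), curvature κ > 0 and torsion τ, set ρ = τ/κ, and let D(s) = (ρ(s)·T(s) + B(s))/√(1+ρ(s)²) be the unit modified Darboux vector field of γ. Define the ruled surface X(s,z) = f(z/R)·γ(s) + R·g(z/R)·D(s). Then for every (s,z) the partial derivatives of X are orthogonal to the principal normal of γ: ⟨∂X/∂s(s,z), N(s)⟩ = 0 and ⟨∂X/∂z(s,z), N(s)⟩ = 0. (Hence the unit normal of this ruled surface along γ is collinear with N, so if γ is a proper concircular helix with axis determined by p₀, the surface X is a concircular surface containing γ as a geodesic.) -/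

import Mathlib

/-!
Both partial derivatives are combinations of vectors orthogonal to `N`.

In the `z`-direction, `∂X/∂z` lies in the span of `γ(s)` and `D(s)`, hence in the span of `γ`, `T`
and `B`, all orthogonal to `N`.

In the `s`-direction, `∂X/∂s = f T + R g D'`. Writing `D = a (ρ T + B)` with `a = (1 + ρ²)^(-1/2)`,
`D' = a' (ρ T + B) + a (ρ' T + ρ T' + B')`, whose `N`-component is `a (ρ κ - τ)` by the Frenet
equations. This vanishes because `ρ = τ / κ`: the Darboux direction is exactly the one for which
the `N`-components of `ρ T'` and `B'` cancel.
-/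

/-- The bilinear form ⟨x,y⟩ = ε x₁y₁ + x₂y₂ + ⋯ on ℝ^m. -/
noncomputable def form (ε : ℝ) {m : ℕ} [NeZero m] (x y : Fin m → ℝ) : ℝ :=
  (ε - 1) * (x 0 * y 0) + ∑ i, x i * y i

/-- f(t) = cos t when ε = 1, cosh t when ε = -1. -/
noncomputable def ff (ε t : ℝ) : ℝ := if ε = 1 then Real.cos t else Real.cosh t

/-- g(t) = sin t when ε = 1, sinh t when ε = -1. -/
noncomputable def gg (ε t : ℝ) : ℝ := if ε = 1 then Real.sin t else Real.sinh t

/-- The ruled surface X(s,z) = f(z/R)·γ(s) + R·g(z/R)·D(s) over a curve γ with director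
curve D. -/
noncomputable def Xsurf (ε R : ℝ) (γ D : ℝ → Fin 4 → ℝ) (s z : ℝ) : Fin 4 → ℝ :=
  ff ε (z / R) • γ s + (R * gg ε (z / R)) • D s

theorem form_add_left (ε : ℝ) {m : ℕ} [NeZero m] (x y w : Fin m → ℝ) :
    form ε (x + y) w = form ε x w + form ε y w := by
  simp only [form, Pi.add_apply, add_mul, Finset.sum_add_distrib]
  ring

theorem form_smul_left (ε : ℝ) {m : ℕ} [NeZero m] (c : ℝ) (x w : Fin m → ℝ) :
    form ε (c • x) w = c * form ε x w := by
  simp only [form, Pi.smul_apply, smul_eq_mul, mul_assoc, ← Finset.mul_sum]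
  ring

theorem form_comm (ε : ℝ) {m : ℕ} [NeZero m] (x y : Fin m → ℝ) :
    form ε x y = form ε y x := by
  simp only [form, mul_comm]

theorem differentiable_ff (ε : ℝ) : Differentiable ℝ (ff ε) := by
  unfold ff
  split_ifs
  · exact Real.differentiable_cos
  · exact Real.differentiable_cosh

theorem differentiable_gg (ε : ℝ) : Differentiable ℝ (gg ε) := by
  unfold gg
  split_ifs
  · exact Real.differentiable_sin
  · exact Real.differentiable_sinh

/-- For the ruled surface X(s,z) = f(z/R)·γ(s) + R·g(z/R)·D(s) over a Frenet curve γ of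
M³(C) with director curve the unit modified Darboux field D = (ρ·T + B)/√(1+ρ²),
ρ = τ/κ, both partial derivatives of X are orthogonal to the principal normal N of γ;
hence the unit normal of the surface along γ is collinear with N and, when γ is a proper
concircular helix, X is a concircular surface containing γ as a geodesic. -/
theorem darboux_ruled_surface_normal_collinear_with_principal_normal
    (ε R : ℝ) (hε : ε = 1 ∨ ε = -1) (hR : 0 < R)
    (I : Set ℝ) (hIo : IsOpen I) (hIc : IsPreconnected I)
    (γ T N B : ℝ → Fin 4 → ℝ) (κ τ : ℝ → ℝ)
    (hγs : ContDiffOn ℝ (⊤ : ℕ∞) γ I) (hTs : ContDiffOn ℝ (⊤ : ℕ∞) T I)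
    (hNs : ContDiffOn ℝ (⊤ : ℕ∞) N I) (hBs : ContDiffOn ℝ (⊤ : ℕ∞) B I)
    (hκs : ContDiffOn ℝ (⊤ : ℕ∞) κ I) (hτs : ContDiffOn ℝ (⊤ : ℕ∞) τ I)
    (hγM : ∀ s ∈ I, form ε (γ s) (γ s) = 1 / (ε / R ^ 2))
    (hκpos : ∀ s ∈ I, 0 < κ s)
    (hγ' : ∀ s ∈ I, HasDerivAt γ (T s) s)
    (hTγ : ∀ s ∈ I, form ε (T s) (γ s) = 0)
    (hNγ : ∀ s ∈ I, form ε (N s) (γ s) = 0)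
    (hBγ : ∀ s ∈ I, form ε (B s) (γ s) = 0)
    (hTT : ∀ s ∈ I, form ε (T s) (T s) = 1)
    (hNN : ∀ s ∈ I, form ε (N s) (N s) = 1)
    (hBB : ∀ s ∈ I, form ε (B s) (B s) = 1)
    (hTN : ∀ s ∈ I, form ε (T s) (N s) = 0)
    (hTB : ∀ s ∈ I, form ε (T s) (B s) = 0)
    (hNB : ∀ s ∈ I, form ε (N s) (B s) = 0)
    (hT' : ∀ s ∈ I, HasDerivAt T (-(ε / R ^ 2) • γ s + κ s • N s) s)
    (hN' : ∀ s ∈ I, HasDerivAt N (-(κ s) • T s + τ s • B s) s)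
    (hB' : ∀ s ∈ I, HasDerivAt B (-(τ s) • N s) s)
    (D : ℝ → Fin 4 → ℝ)
    (hD : ∀ s ∈ I, D s = (Real.sqrt (1 + (τ s / κ s) ^ 2))⁻¹ •
      ((τ s / κ s) • T s + B s)) :
    ∀ s ∈ I, ∀ z : ℝ,
      form ε (deriv (fun u => Xsurf ε R γ D u z) s) (N s) = 0 ∧
      form ε (deriv (fun w => Xsurf ε R γ D s w) z) (N s) = 0 := by
  intro s hs z
  have hI : I ∈ nhds s := hIo.mem_nhds hs
  have hκ0 : κ s ≠ 0 := (hκpos s hs).ne'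
  have hγN : form ε (γ s) (N s) = 0 := by rw [form_comm, hNγ s hs]
  have hBN : form ε (B s) (N s) = 0 := by rw [form_comm, hNB s hs]
  have hDN : form ε (D s) (N s) = 0 := by
    simp only [hD s hs, form_smul_left, form_add_left, hTN s hs, hBN, mul_zero, add_zero]
  constructor
  · have hκd : DifferentiableAt ℝ κ s := (hκs.contDiffAt hI).differentiableAt (by simp)
    have hτd : DifferentiableAt ℝ τ s := (hτs.contDiffAt hI).differentiableAt (by simp)
    have hρd : DifferentiableAt ℝ (fun u => τ u / κ u) s := hτd.div hκd hκ0
    have hpos : 0 < 1 + (τ s / κ s) ^ 2 := by positivity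
    have had : DifferentiableAt ℝ (fun u => (Real.sqrt (1 + (τ u / κ u) ^ 2))⁻¹) s :=
      (((hρd.pow 2).const_add 1).sqrt hpos.ne').inv (Real.sqrt_pos.2 hpos).ne'
    have hD' := (had.hasDerivAt.smul
      ((hρd.hasDerivAt.smul (hT' s hs)).add (hB' s hs))).congr_of_eventuallyEq
        (Filter.eventuallyEq_of_mem hI hD)
    have hX := ((hγ' s hs).const_smul (ff ε (z / R))).add (hD'.const_smul (R * gg ε (z / R)))
    have hX' : deriv (fun u => Xsurf ε R γ D u z) s = _ := hX.deriv
    rw [hX']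
    simp only [form_smul_left, form_add_left, Pi.add_apply, Pi.smul_apply', hTN s hs, hNN s hs,
      hγN, hBN]
    field_simp
    ring
  · have hf : DifferentiableAt ℝ (fun w => ff ε (w / R)) z :=
      (differentiable_ff ε _).comp z (differentiableAt_id.div_const R)
    have hg : DifferentiableAt ℝ (fun w => R * gg ε (w / R)) z :=
      ((differentiable_gg ε _).comp z (differentiableAt_id.div_const R)).const_mul R
    have hX := (hf.hasDerivAt.smul_const (γ s)).add (hg.hasDerivAt.smul_const (D s))
    have hX' : deriv (fun w => Xsurf ε R γ D s w) z = _ := hX.deriv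
    rw [hX']
    simp only [form_smul_left, form_add_left, hγN, hDN, mul_zero, add_zero]
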